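/- arXiv:2406.04012 — 3 statements merged into one kernel-verified Lean document; each statement's English description precedes it below -/
import Mathlib

section
/- (Lipschitz bound for the entropy gradient field.) Let y₁,…,y_n ∈ ℝ^d with second moment m₂ = (1/n)Σ_i‖y_i‖², and let N_y be the associated entropy gradient field. Then for all w, w' ∈ ℝ^d, ‖N_y(w') − N_y(w)‖ ≤ (1/ε² + √(2 m₂ n)/ε³) · ‖w' − w‖. -/
/-!
Dividing the gradient of the mixture by the mixture gives
`(Σᵢ ∇k(θ - yᵢ)) / (Σᵢ k(θ - yᵢ)) = -(1/ε²) (θ - m(θ))`, where `m(θ)` is the average of the `yᵢ`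
with the posterior weights `k(θ - yᵢ) / Σⱼ k(θ - yⱼ)` (`postMean`). Hence
`N_y(w) = -(1/ε²) w + (1/ε²) ∫ k(θ - w) m(θ) dθ` (`entGrad_eq`), and the linear part contributes
`‖w' - w‖ / ε²`. For the other part, `m` is bounded by `√(Σᵢ ‖yᵢ‖²) = √(m₂ n)`
(`norm_postMean_le`), so it suffices to bound the `L¹` distance of two translates of the Gaussian
by `‖w' - w‖ / ε` (`integral_abs_kG_sub_le`). This is the comparison of the `L¹` distance with the
Hellinger distance: the geometric mean of the densities `k(θ - w)`, `k(θ - w')` is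
`exp(-‖w' - w‖²/(8ε²))` times the density centred at the midpoint, so the Hellinger distance is
explicit.
-/

open MeasureTheory Real

/-- The normalized Gaussian kernel on `ℝ^d` with covariance `ε² I_d`. -/
noncomputable def kG (d : ℕ) (ε : ℝ) (x : EuclideanSpace ℝ (Fin d)) : ℝ :=
  (2 * π * ε ^ 2) ^ (-(d : ℝ) / 2) * Real.exp (-‖x‖ ^ 2 / (2 * ε ^ 2))

/-- Gradient of the Gaussian kernel: `∇k_ε(x) = -(x/ε²) k_ε(x)`. -/
noncomputable def nablaKG (d : ℕ) (ε : ℝ) (x : EuclideanSpace ℝ (Fin d)) :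
    EuclideanSpace ℝ (Fin d) :=
  (-(1 / ε ^ 2) * kG d ε x) • x

/-- The entropy gradient field associated with the points `ys`:
`N_y(w) = ∫ k_ε(θ - w) (Σᵢ ∇k_ε(θ - yᵢ))/(Σᵢ k_ε(θ - yᵢ)) dθ`. -/
noncomputable def entGrad (d : ℕ) (ε : ℝ) {n : ℕ} (ys : Fin n → EuclideanSpace ℝ (Fin d))
    (w : EuclideanSpace ℝ (Fin d)) : EuclideanSpace ℝ (Fin d) :=
  ∫ θ, ((∑ i, kG d ε (θ - ys i))⁻¹ * kG d ε (θ - w)) • (∑ i, nablaKG d ε (θ - ys i))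

/-! ### The Gaussian kernel: normalization, mean and integrability -/

lemma kG_pos (d : ℕ) {ε : ℝ} (hε : 0 < ε) (x : EuclideanSpace ℝ (Fin d)) : 0 < kG d ε x := by
  unfold kG; positivity

lemma continuous_kG (d : ℕ) (ε : ℝ) : Continuous (kG d ε) := by
  unfold kG; fun_prop

lemma integrable_exp_sq (d : ℕ) {b : ℝ} (hb : 0 < b) :
    Integrable (fun x : EuclideanSpace ℝ (Fin d) => Real.exp (-b * ‖x‖ ^ 2)) := by
  have h := GaussianFourier.integrable_cexp_neg_mul_sq_norm_add (V := EuclideanSpace ℝ (Fin d))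
    (b := (b : ℂ)) (by simpa using hb) 0 0
  refine h.norm.congr (Filter.Eventually.of_forall fun x => ?_)
  simp only [Complex.norm_exp]
  congr 1
  simp [← Complex.ofReal_pow, ← Complex.ofReal_mul]

lemma kG_eq (d : ℕ) (ε : ℝ) (x : EuclideanSpace ℝ (Fin d)) :
    kG d ε x = (2 * π * ε ^ 2) ^ (-(d : ℝ) / 2) * Real.exp (-(1 / (2 * ε ^ 2)) * ‖x‖ ^ 2) := by
  unfold kG; congr 2; ring

lemma integrable_kG (d : ℕ) {ε : ℝ} (hε : 0 < ε) : Integrable (kG d ε) := by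
  rw [funext (kG_eq d ε)]
  exact (integrable_exp_sq d (by positivity)).const_mul _

lemma integral_kG (d : ℕ) {ε : ℝ} (hε : 0 < ε) : ∫ x, kG d ε x = 1 := by
  rw [funext (kG_eq d ε), integral_const_mul,
    GaussianFourier.integral_rexp_neg_mul_sq_norm (by positivity)]
  have h : π / (1 / (2 * ε ^ 2)) = 2 * π * ε ^ 2 := by field_simp
  rw [h, ← Real.rpow_add (by positivity)]
  simp [neg_div]

lemma integrable_kG_smul_self (d : ℕ) {ε : ℝ} (hε : 0 < ε) :
    Integrable (fun x => kG d ε x • x) := by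
  set C : ℝ := (2 * π * ε ^ 2) ^ (-(d : ℝ) / 2) with hC
  have hC0 : 0 ≤ C := by positivity
  have hi : Integrable (fun x : EuclideanSpace ℝ (Fin d) =>
      (C * ε) * Real.exp (-(1 / (4 * ε ^ 2)) * ‖x‖ ^ 2)) :=
    (integrable_exp_sq d (by positivity)).const_mul _
  refine hi.mono' ((continuous_kG d ε).smul continuous_id).aestronglyMeasurable
    (Filter.Eventually.of_forall fun x => ?_)
  rw [norm_smul, Real.norm_of_nonneg (kG_pos d hε x).le, kG_eq, ← hC]
  have hsplit : Real.exp (-(1 / (2 * ε ^ 2)) * ‖x‖ ^ 2) * Real.exp ((1 / (4 * ε ^ 2)) * ‖x‖ ^ 2)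
      = Real.exp (-(1 / (4 * ε ^ 2)) * ‖x‖ ^ 2) := by
    rw [← Real.exp_add]; congr 1; field_simp; ring
  -- With `t = ‖x‖ / ε`: `t ≤ 1 + t² / 4 ≤ exp (t² / 4)`.
  have hx : ‖x‖ ≤ ε * Real.exp ((1 / (4 * ε ^ 2)) * ‖x‖ ^ 2) := by
    have h1 := Real.add_one_le_exp ((1 / (4 * ε ^ 2)) * ‖x‖ ^ 2)
    have h2 : ‖x‖ ≤ ε * ((1 / (4 * ε ^ 2)) * ‖x‖ ^ 2 + 1) := by
      have h3 : ε * ((1 / (4 * ε ^ 2)) * ‖x‖ ^ 2 + 1) - ‖x‖ = (‖x‖ - 2 * ε) ^ 2 / (4 * ε) := by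
        field_simp; ring
      have h4 : 0 ≤ (‖x‖ - 2 * ε) ^ 2 / (4 * ε) := by positivity
      linarith
    exact h2.trans (by gcongr)
  rw [← hsplit]
  calc _ ≤ C * Real.exp (-(1 / (2 * ε ^ 2)) * ‖x‖ ^ 2) *
        (ε * Real.exp ((1 / (4 * ε ^ 2)) * ‖x‖ ^ 2)) := by gcongr
    _ = _ := by ring

lemma integral_kG_smul_self (d : ℕ) (ε : ℝ) : ∫ x, kG d ε x • x = 0 := by
  have h := integral_neg_eq_self (fun x => kG d ε x • x) volume
  simp only [kG, norm_neg, smul_neg, integral_neg] at h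
  simp only [kG]
  have h2 := neg_eq_iff_add_eq_zero.mp h
  rw [← two_smul ℝ] at h2
  exact (smul_eq_zero.mp h2).resolve_left two_ne_zero

lemma integrable_kG_sub_smul (d : ℕ) {ε : ℝ} (hε : 0 < ε) (w : EuclideanSpace ℝ (Fin d)) :
    Integrable (fun θ => kG d ε (θ - w) • θ) := by
  have h := ((integrable_kG_smul_self d hε).add ((integrable_kG d hε).smul_const w)).comp_sub_right w
  refine h.congr (Filter.Eventually.of_forall fun θ => ?_)
  simp [← smul_add]

lemma integral_kG_sub_smul (d : ℕ) {ε : ℝ} (hε : 0 < ε) (w : EuclideanSpace ℝ (Fin d)) :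
    ∫ θ, kG d ε (θ - w) • θ = w := by
  have h := integral_sub_right_eq_self (μ := volume) (fun x => kG d ε x • (x + w)) w
  simp only [sub_add_cancel] at h
  rw [h]
  simp only [smul_add]
  rw [integral_add (integrable_kG_smul_self d hε) ((integrable_kG d hε).smul_const w),
    integral_kG_smul_self, integral_smul_const, integral_kG d hε]
  simp

/-! ### The `L¹` distance of translated Gaussians -/

/-- The product of two translated Gaussians, via the parallelogram identity. -/
lemma kG_mul_kG (d : ℕ) {ε : ℝ} (hε : 0 < ε) (w w' θ : EuclideanSpace ℝ (Fin d)) :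
    kG d ε (θ - w') * kG d ε (θ - w) =
      (Real.exp (-‖w' - w‖ ^ 2 / (8 * ε ^ 2)) *
        kG d ε (θ - (1 / 2 : ℝ) • (w + w'))) ^ 2 := by
  have hp := parallelogram_law_with_norm ℝ (θ - w') (θ - w)
  have e1 : θ - w' + (θ - w) = (2 : ℝ) • (θ - (1 / 2 : ℝ) • (w + w')) := by
    rw [smul_sub, smul_smul]; norm_num; rw [two_smul]; abel
  have e2 : θ - w' - (θ - w) = -(w' - w) := by abel
  rw [e1, e2, norm_neg, norm_smul] at hp
  norm_num at hp
  simp only [kG]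
  set C : ℝ := (2 * π * ε ^ 2) ^ (-(d : ℝ) / 2)
  rw [mul_pow, mul_pow, ← Real.exp_nat_mul, ← Real.exp_nat_mul, mul_mul_mul_comm, ← Real.exp_add,
    mul_left_comm, ← Real.exp_add, ← sq]
  congr 2
  norm_num
  field_simp
  nlinarith [hp]

/-- AM-GM for `|a - b| = |√a - √b| (√a + √b)`, with `|r|` the geometric mean of `a` and `b`;
the weight `s` is free. -/
lemma abs_sub_le_of_sq {a b r s : ℝ} (ha : 0 ≤ a) (hb : 0 ≤ b) (hs : 0 < s)
    (h : a * b = r ^ 2) :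
    |a - b| ≤ (1 / 2) * (s * (a + b - 2 * r) + s⁻¹ * (a + b + 2 * r)) := by
  have hr : |2 * r| ≤ a + b :=
    abs_le_of_sq_le_sq (by nlinarith [sq_nonneg (a - b)]) (by positivity)
  have h1 : 0 ≤ a + b - 2 * r := by linarith [(abs_le.mp hr).2]
  have h2 : 0 ≤ a + b + 2 * r := by linarith [(abs_le.mp hr).1]
  have hss : s * s⁻¹ = 1 := mul_inv_cancel₀ hs.ne'
  have h3 : 0 ≤ s⁻¹ := by positivity
  refine abs_le_of_sq_le_sq ?_ (by positivity)
  have h4 : (a - b) ^ 2 = (s * (a + b - 2 * r)) * (s⁻¹ * (a + b + 2 * r)) := by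
    rw [mul_mul_mul_comm, hss]; linear_combination (-4) * h
  rw [h4]
  nlinarith [sq_nonneg (s * (a + b - 2 * r) - s⁻¹ * (a + b + 2 * r))]

/-- The `L¹` distance of two translates of the Gaussian is at most `‖w' - w‖ / ε`. -/
lemma integral_abs_kG_sub_le (d : ℕ) {ε : ℝ} (hε : 0 < ε) (w w' : EuclideanSpace ℝ (Fin d)) :
    ∫ θ, |kG d ε (θ - w') - kG d ε (θ - w)| ≤ ‖w' - w‖ / ε := by
  rcases eq_or_ne w' w with rfl | hne
  · simp
  have hpos : 0 < ‖w' - w‖ := norm_pos_iff.mpr (sub_ne_zero.mpr hne)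
  set D := ‖w' - w‖ with hD
  set q : ℝ := Real.exp (-D ^ 2 / (8 * ε ^ 2)) with hq
  set c := (1 / 2 : ℝ) • (w + w')
  -- The AM-GM weight balances the bounds `D² / (4ε²)` and `4` for `2 - 2q` and `2 + 2q`.
  set s : ℝ := 4 * ε / D with hs
  have hs0 : 0 < s := by positivity
  have I (v : EuclideanSpace ℝ (Fin d)) : Integrable (fun θ => kG d ε (θ - v)) :=
    (integrable_kG d hε).comp_sub_right v
  have J (v : EuclideanSpace ℝ (Fin d)) : ∫ θ, kG d ε (θ - v) = 1 := by
    rw [integral_sub_right_eq_self (kG d ε) v, integral_kG d hε]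
  have Iab : Integrable (fun θ => kG d ε (θ - w') + kG d ε (θ - w)) := (I w').add (I w)
  have Ic := ((I c).const_mul q).const_mul 2
  have Im : Integrable (fun θ => s * (kG d ε (θ - w') + kG d ε (θ - w) - 2 * (q * kG d ε (θ - c)))) :=
    (Iab.sub Ic).const_mul s
  have Ip : Integrable
      (fun θ => s⁻¹ * (kG d ε (θ - w') + kG d ε (θ - w) + 2 * (q * kG d ε (θ - c)))) :=
    (Iab.add Ic).const_mul s⁻¹
  have hab : ∫ θ, (kG d ε (θ - w') + kG d ε (θ - w)) = 2 := by
    rw [integral_add (I w') (I w), J, J]; norm_num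
  have hc : ∫ θ, 2 * (q * kG d ε (θ - c)) = 2 * q := by
    rw [integral_const_mul, integral_const_mul, J, mul_one]
  calc ∫ θ, |kG d ε (θ - w') - kG d ε (θ - w)|
      ≤ ∫ θ, (1 / 2) * (s * (kG d ε (θ - w') + kG d ε (θ - w) - 2 * (q * kG d ε (θ - c))) +
          s⁻¹ * (kG d ε (θ - w') + kG d ε (θ - w) + 2 * (q * kG d ε (θ - c)))) := by
        refine integral_mono ((I w').sub (I w)).abs ((Im.add Ip).const_mul _) fun θ => ?_
        exact abs_sub_le_of_sq (kG_pos d hε _).le (kG_pos d hε _).le hs0 (kG_mul_kG d hε w w' θ)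
    _ = (1 / 2) * (s * (2 - 2 * q) + s⁻¹ * (2 + 2 * q)) := by
        rw [integral_const_mul, integral_add Im Ip, integral_const_mul, integral_const_mul,
          integral_sub Iab Ic, integral_add Iab Ic, hab, hc]
    _ ≤ (1 / 2) * (s * (D ^ 2 / (4 * ε ^ 2)) + s⁻¹ * 4) := by
        have h1 : -D ^ 2 / (8 * ε ^ 2) + 1 ≤ q := Real.add_one_le_exp _
        have h2 : q ≤ 1 := by
          rw [hq, Real.exp_le_one_iff, neg_div]
          exact neg_nonpos.mpr (by positivity)
        have h3 : 2 - 2 * q ≤ D ^ 2 / (4 * ε ^ 2) := by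
          have : D ^ 2 / (4 * ε ^ 2) = -2 * (-D ^ 2 / (8 * ε ^ 2)) := by field_simp; ring
          linarith
        gcongr
        linarith
    _ = D / ε := by rw [hs]; field_simp; ring

/-! ### The posterior mean -/

/-- The average of the points `yᵢ` with weights `k(θ - yᵢ) / Σⱼ k(θ - yⱼ)`: the posterior mean of
a uniformly chosen point given its noisy observation `θ`. -/
noncomputable def postMean (d : ℕ) (ε : ℝ) {n : ℕ} (ys : Fin n → EuclideanSpace ℝ (Fin d))
    (θ : EuclideanSpace ℝ (Fin d)) : EuclideanSpace ℝ (Fin d) :=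
  (∑ i, kG d ε (θ - ys i))⁻¹ • ∑ i, kG d ε (θ - ys i) • ys i

lemma sum_kG_pos {d : ℕ} {ε : ℝ} (hε : 0 < ε) {n : ℕ} (hn : 1 ≤ n)
    (ys : Fin n → EuclideanSpace ℝ (Fin d))
    (θ : EuclideanSpace ℝ (Fin d)) : 0 < ∑ i, kG d ε (θ - ys i) :=
  Finset.sum_pos (fun _ _ => kG_pos d hε _) ⟨⟨0, hn⟩, Finset.mem_univ _⟩

lemma continuous_postMean {d : ℕ} {ε : ℝ} (hε : 0 < ε) {n : ℕ} (hn : 1 ≤ n)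
    (ys : Fin n → EuclideanSpace ℝ (Fin d)) :
    Continuous (postMean d ε ys) := by
  have hk := continuous_kG d ε
  unfold postMean
  refine Continuous.smul (Continuous.inv₀ (by fun_prop) fun θ => (sum_kG_pos hε hn ys θ).ne') ?_
  fun_prop

lemma norm_postMean_le {d : ℕ} {ε : ℝ} (hε : 0 < ε) {n : ℕ} (hn : 1 ≤ n)
    (ys : Fin n → EuclideanSpace ℝ (Fin d))
    (θ : EuclideanSpace ℝ (Fin d)) :
    ‖postMean d ε ys θ‖ ≤ √(∑ i, ‖ys i‖ ^ 2) := by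
  have hS := sum_kG_pos hε hn ys θ
  rw [postMean, norm_smul, norm_inv, Real.norm_of_nonneg hS.le, inv_mul_le_iff₀ hS, Finset.sum_mul]
  refine (norm_sum_le _ _).trans (Finset.sum_le_sum fun i _ => ?_)
  rw [norm_smul, Real.norm_of_nonneg (kG_pos d hε _).le]
  refine mul_le_mul_of_nonneg_left (Real.le_sqrt_of_sq_le ?_) (kG_pos d hε _).le
  exact Finset.single_le_sum (f := fun i => ‖ys i‖ ^ 2) (fun j _ => by positivity)
    (Finset.mem_univ i)

lemma integrable_kG_smul_postMean {d : ℕ} {ε : ℝ} (hε : 0 < ε) {n : ℕ} (hn : 1 ≤ n)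
    (ys : Fin n → EuclideanSpace ℝ (Fin d))
    (w : EuclideanSpace ℝ (Fin d)) :
    Integrable (fun θ => kG d ε (θ - w) • postMean d ε ys θ) :=
  ((integrable_kG d hε).comp_sub_right w).smul_bdd _
    (continuous_postMean hε hn ys).aestronglyMeasurable
    (Filter.Eventually.of_forall (norm_postMean_le hε hn ys))

lemma entGrad_eq {d : ℕ} {ε : ℝ} (hε : 0 < ε) {n : ℕ} (hn : 1 ≤ n)
    (ys : Fin n → EuclideanSpace ℝ (Fin d))
    (w : EuclideanSpace ℝ (Fin d)) :
    entGrad d ε ys w =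
      (1 / ε ^ 2) • ((∫ θ, kG d ε (θ - w) • postMean d ε ys θ) - w) := by
  have hint (θ : EuclideanSpace ℝ (Fin d)) :
      ((∑ i, kG d ε (θ - ys i))⁻¹ * kG d ε (θ - w)) • (∑ i, nablaKG d ε (θ - ys i)) =
        (1 / ε ^ 2) • (kG d ε (θ - w) • postMean d ε ys θ - kG d ε (θ - w) • θ) := by
    have hS := (sum_kG_pos hε hn ys θ).ne'
    have h1 : ∑ i, nablaKG d ε (θ - ys i) = (1 / ε ^ 2) •
        ((∑ i, kG d ε (θ - ys i) • ys i) - (∑ i, kG d ε (θ - ys i)) • θ) := by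
      rw [Finset.sum_smul, ← Finset.sum_sub_distrib, Finset.smul_sum]
      refine Finset.sum_congr rfl fun i _ => ?_
      rw [nablaKG]; module
    rw [h1, postMean]
    generalize (∑ i, kG d ε (θ - ys i) • ys i) = P
    set S := ∑ i, kG d ε (θ - ys i)
    match_scalars <;> field_simp
  rw [entGrad]
  simp_rw [hint]
  rw [integral_smul, integral_sub (integrable_kG_smul_postMean hε hn ys w)
    (integrable_kG_sub_smul d hε w), integral_kG_sub_smul d hε]

/-- Proposition D.3: Lipschitz bound for the entropy gradient field:
`‖N_y(w') - N_y(w)‖ ≤ (1/ε² + √(2 m₂ n)/ε³) ‖w' - w‖`. -/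
theorem stmt_12 (d : ℕ) (hd : 1 ≤ d) (ε : ℝ) (hε : 0 < ε) (n : ℕ) (hn : 1 ≤ n)
    (ys : Fin n → EuclideanSpace ℝ (Fin d))
    (m2 : ℝ) (hm2 : m2 = (1 / n : ℝ) * ∑ i, ‖ys i‖ ^ 2)
    (w w' : EuclideanSpace ℝ (Fin d)) :
    ‖entGrad d ε ys w' - entGrad d ε ys w‖ ≤
      (1 / ε ^ 2 + Real.sqrt (2 * m2 * n) / ε ^ 3) * ‖w' - w‖ := by
  have hn0 : (n : ℝ) ≠ 0 := by positivity
  set R := √(∑ i, ‖ys i‖ ^ 2) with hR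
  have hR0 : 0 ≤ R := Real.sqrt_nonneg _
  have hRm : R ≤ √(2 * m2 * n) := by
    refine Real.sqrt_le_sqrt ?_
    have h1 : 2 * m2 * n = 2 * ∑ i, ‖ys i‖ ^ 2 := by rw [hm2]; field_simp
    have h2 : 0 ≤ ∑ i, ‖ys i‖ ^ 2 := by positivity
    linarith
  set M : EuclideanSpace ℝ (Fin d) → EuclideanSpace ℝ (Fin d) :=
    fun v => ∫ θ, kG d ε (θ - v) • postMean d ε ys θ
  have hM : ‖M w' - M w‖ ≤ ‖w' - w‖ / ε * R := by
    have Id : Integrable (fun θ => kG d ε (θ - w') - kG d ε (θ - w)) :=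
      ((integrable_kG d hε).comp_sub_right w').sub ((integrable_kG d hε).comp_sub_right w)
    calc ‖M w' - M w‖
        = ‖∫ θ, (kG d ε (θ - w') - kG d ε (θ - w)) • postMean d ε ys θ‖ := by
          simp only [sub_smul]
          rw [integral_sub (integrable_kG_smul_postMean hε hn ys w')
            (integrable_kG_smul_postMean hε hn ys w)]
      _ ≤ ∫ θ, |kG d ε (θ - w') - kG d ε (θ - w)| * R := by
          refine norm_integral_le_of_norm_le (Id.abs.mul_const R)
            (Filter.Eventually.of_forall fun θ => ?_)
          rw [norm_smul, Real.norm_eq_abs]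
          exact mul_le_mul_of_nonneg_left (norm_postMean_le hε hn ys θ) (abs_nonneg _)
      _ ≤ ‖w' - w‖ / ε * R := by
          rw [integral_mul_const]
          exact mul_le_mul_of_nonneg_right (integral_abs_kG_sub_le d hε w w') hR0
  have hE : entGrad d ε ys w' - entGrad d ε ys w = (1 / ε ^ 2) • ((M w' - M w) - (w' - w)) := by
    rw [entGrad_eq hε hn, entGrad_eq hε hn]; module
  calc ‖entGrad d ε ys w' - entGrad d ε ys w‖
      = 1 / ε ^ 2 * ‖(M w' - M w) - (w' - w)‖ := by
        rw [hE, norm_smul, Real.norm_of_nonneg (by positivity)]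
    _ ≤ 1 / ε ^ 2 * (‖w' - w‖ / ε * √(2 * m2 * n) + ‖w' - w‖) := by
        gcongr
        refine (norm_sub_le _ _).trans ?_
        gcongr
        exact hM.trans (by gcongr)
    _ = _ := by field_simp; ring
end

section
/- (Wasserstein Hessian of the relative entropy.) Let V : ℝ^d → ℝ be twice continuously differentiable, let μ be a probability measure on ℝ^d, and let ψ : ℝ^d → ℝ be smooth with compact support. Define, for t in a neighborhood of 0, h(t) = ∫_{ℝ^d} [ V(x + t∇ψ(x)) − V(x) − log det(I_d + t·Hψ(x)) ] dμ(x), where Hψ is the Hessian matrix of ψ (the integrand vanishes outside the support of ψ, so h is well-defined for |t| small enough that det(I_d + t·Hψ(x)) > 0 for all x). Then there exists t₀ > 0 such that h is twice differentiable on (−t₀, t₀) and h''(0) = ∫_{ℝ^d} [ ⟨H_V(x) ∇ψ(x), ∇ψ(x)⟩ + ‖Hψ(x)‖²_HS ] dμ(x), where H_V is the Hessian of V and ‖·‖_HS is the Hilbert–Schmidt (Frobenius) norm. -/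
/-!
The integrand `F(t, x) = V(x + t∇ψ(x)) - V(x) - log det(I + t Hψ(x))` is jointly `C^2` on a strip
`(-r, r) × ℝ^d` on which the determinant is positive, because `V` is `C^2` and `ψ` is smooth; such
an `r` exists by compactness of the support of `ψ` (`exists_det_pos`). Moreover `F` vanishes for `x`
outside that support, and hence so does `∂ₜF`. A jointly `C^1` integrand with compact support in
`x` may be differentiated under the integral of a finite measure (`hasDerivAt_integral_slice`).
Applied to `F` and then to `∂ₜF`, this gives `h' = ∫ ∂ₜF dμ` and `h'' = ∫ ∂ₜ²F dμ` on `(-r, r)`.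

It remains to compute `∂ₜ²F(0, x)` pointwise (`sliceDeriv_sliceDeriv_entropyIntegrand`). As `Hψ(x)`
is symmetric, with eigenvalues `λᵢ` say, `log det(I + t Hψ(x)) = ∑ log(1 + t λᵢ)`, whose second
derivative at `0` is `-∑ λᵢ² = -‖Hψ(x)‖²_HS`; the `V` term contributes `D²V(x)(∇ψ(x), ∇ψ(x))`.
-/

open MeasureTheory Matrix

/-- The Hessian matrix of `f : ℝ^d → ℝ` at `x`, with entries given by the second
iterated Fréchet derivative evaluated at pairs of standard basis vectors. -/
noncomputable def hessMat (d : ℕ) (f : EuclideanSpace ℝ (Fin d) → ℝ)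
    (x : EuclideanSpace ℝ (Fin d)) : Matrix (Fin d) (Fin d) ℝ :=
  fun i j => iteratedFDeriv ℝ 2 f x
    ![EuclideanSpace.single i (1 : ℝ), EuclideanSpace.single j (1 : ℝ)]

/-- The partial derivative of `F : ℝ × E → ℝ` in its real variable, encoded as the Fréchet
derivative in the direction `(1, 0)` so that its joint regularity is inherited from `F`. -/
noncomputable def sliceDeriv {E : Type*} [NormedAddCommGroup E] [NormedSpace ℝ E]
    (F : ℝ × E → ℝ) (p : ℝ × E) : ℝ := fderiv ℝ F p (1, 0)

/-! ### Differentiation under the integral sign -/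

section slice
theorem isOpen_strip {E : Type*} [TopologicalSpace E] {r : ℝ} :
    IsOpen (Set.Ioo (-r) r ×ˢ (Set.univ : Set E)) :=
  isOpen_Ioo.prod isOpen_univ

variable {E : Type*} [NormedAddCommGroup E] [NormedSpace ℝ E] {F : ℝ × E → ℝ} {r : ℝ}

theorem hasDerivAt_slice (hF : ContDiffOn ℝ 1 F (Set.Ioo (-r) r ×ˢ Set.univ))
    {t : ℝ} (ht : t ∈ Set.Ioo (-r) r) (x : E) :
    HasDerivAt (fun s => F (s, x)) (sliceDeriv F (t, x)) t := by
  have h1 : HasFDerivAt F (fderiv ℝ F (t, x)) (t, x) :=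
    ((hF.contDiffAt (isOpen_strip.mem_nhds ⟨ht, trivial⟩)).differentiableAt
      one_ne_zero).hasFDerivAt
  have h2 : HasDerivAt (fun s : ℝ => (s, x)) ((1 : ℝ), (0 : E)) t :=
    (hasDerivAt_id t).prodMk (hasDerivAt_const t x)
  exact h1.comp_hasDerivAt t h2

theorem contDiffOn_sliceDeriv {m n : WithTop ℕ∞}
    (hF : ContDiffOn ℝ n F (Set.Ioo (-r) r ×ˢ Set.univ)) (hmn : m + 1 ≤ n) :
    ContDiffOn ℝ m (sliceDeriv F) (Set.Ioo (-r) r ×ˢ Set.univ) :=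
  (hF.fderiv_of_isOpen isOpen_strip hmn).clm_apply contDiffOn_const

theorem sliceDeriv_eq_zero (hF : ContDiffOn ℝ 1 F (Set.Ioo (-r) r ×ˢ Set.univ)) {K : Set E}
    (h0 : ∀ t ∈ Set.Ioo (-r) r, ∀ x ∉ K, F (t, x) = 0) :
    ∀ t ∈ Set.Ioo (-r) r, ∀ x ∉ K, sliceDeriv F (t, x) = 0 := by
  intro t ht x hx
  refine (hasDerivAt_slice hF ht x).unique ((hasDerivAt_const t (0 : ℝ)).congr_of_eventuallyEq ?_)
  filter_upwards [isOpen_Ioo.mem_nhds ht] with s hs using h0 s hs x hx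

/-- Differentiation under the integral sign for a jointly `C^1` integrand on `(-r, r) × E` that
vanishes for `x` outside a compact set `K`: near a given `t`, the partial derivative is dominated
by its maximum over a compact set `[t - ε, t + ε] × K`, which is integrable since `μ` is finite. -/
theorem hasDerivAt_integral_slice [MeasurableSpace E] [BorelSpace E]
    (μ : Measure E) [IsFiniteMeasure μ] {K : Set E} (hK : IsCompact K)
    (hF : ContDiffOn ℝ 1 F (Set.Ioo (-r) r ×ˢ Set.univ))
    (h0 : ∀ t ∈ Set.Ioo (-r) r, ∀ x ∉ K, F (t, x) = 0) {t : ℝ} (ht : t ∈ Set.Ioo (-r) r) :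
    HasDerivAt (fun s => ∫ x, F (s, x) ∂μ) (∫ x, sliceDeriv F (t, x) ∂μ) t := by
  have h0' := sliceDeriv_eq_zero hF h0
  have hF' : ContinuousOn (sliceDeriv F) (Set.Ioo (-r) r ×ˢ Set.univ) :=
    (contDiffOn_sliceDeriv (m := 0) hF (by simp)).continuousOn
  -- Each time slice of `F` and of its partial derivative is continuous with support in `K`.
  have hslice : ∀ G : ℝ × E → ℝ, ContinuousOn G (Set.Ioo (-r) r ×ˢ Set.univ) →
      (∀ t ∈ Set.Ioo (-r) r, ∀ x ∉ K, G (t, x) = 0) →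
      ∀ s ∈ Set.Ioo (-r) r, Integrable (fun x => G (s, x)) μ := by
    intro G hG hG0 s hs
    have hc : Continuous fun x => G (s, x) :=
      hG.comp_continuous (by fun_prop) fun x => ⟨hs, trivial⟩
    exact hc.integrable_of_hasCompactSupport (HasCompactSupport.intro hK (hG0 s hs))
  obtain ⟨ε, hε, hball⟩ := Metric.nhds_basis_closedBall.mem_iff.1 (isOpen_Ioo.mem_nhds ht)
  obtain ⟨C, hC⟩ := ((isCompact_closedBall t ε).prod hK).exists_bound_of_continuousOn
    (hF'.mono (Set.prod_mono hball (Set.subset_univ _)))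
  refine (hasDerivAt_integral_of_dominated_loc_of_deriv_le (bound := fun _ => max C 0)
    (F := fun s x => F (s, x)) (F' := fun s x => sliceDeriv F (s, x))
    (Metric.closedBall_mem_nhds t hε) ?_ (hslice F hF.continuousOn h0 t ht)
    (hslice _ hF' h0' t ht).aestronglyMeasurable ?_ (integrable_const _) ?_).2
  · filter_upwards [isOpen_Ioo.mem_nhds ht] with s hs
      using (hslice F hF.continuousOn h0 s hs).aestronglyMeasurable
  · refine .of_forall fun x s hs => ?_
    by_cases hx : x ∈ K
    · exact (hC (s, x) ⟨hs, hx⟩).trans (le_max_left _ _)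
    · rw [h0' s (hball hs) x hx]; simp
  · exact .of_forall fun x s hs => hasDerivAt_slice hF (hball hs) x
end slice

/-! ### Spectral identities and Hessian matrices -/

section linalg
variable {d : ℕ}

/-- The real spectral theorem with the orthogonal matrix and its inverse as plain matrices. -/
theorem exists_diagonalization {A : Matrix (Fin d) (Fin d) ℝ} (hA : A.IsHermitian) :
    ∃ U W : Matrix (Fin d) (Fin d) ℝ, U * W = 1 ∧ W * U = 1 ∧
      A = U * diagonal hA.eigenvalues * W := by
  refine ⟨hA.eigenvectorUnitary, star hA.eigenvectorUnitary,
    Unitary.coe_mul_star_self hA.eigenvectorUnitary,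
    Unitary.coe_star_mul_self hA.eigenvectorUnitary, ?_⟩
  conv_lhs => rw [hA.spectral_theorem, Unitary.conjStarAlgAut_apply]
  rfl

theorem det_one_add_smul_eq_prod {A : Matrix (Fin d) (Fin d) ℝ} (hA : A.IsHermitian) (t : ℝ) :
    (1 + t • A).det = ∏ i, (1 + t * hA.eigenvalues i) := by
  obtain ⟨U, W, hU, -, hs⟩ := exists_diagonalization hA
  have : 1 + t • A = U * diagonal (fun i => 1 + t * hA.eigenvalues i) * W := by
    have : diagonal (fun i => 1 + t * hA.eigenvalues i) = 1 + t • diagonal hA.eigenvalues := by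
      rw [← diagonal_one, ← diagonal_smul, diagonal_add]; rfl
    rw [this, mul_add, add_mul, mul_one, hU]
    conv_lhs => rw [hs]
    simp
  rw [this, det_mul_right_comm, hU, one_mul, det_diagonal]

/-- For a symmetric matrix both sides equal the trace of `A * A`, that is, the squared
Hilbert–Schmidt norm of `A`. -/
theorem sum_sq_eigenvalues {A : Matrix (Fin d) (Fin d) ℝ} (hA : A.IsHermitian) :
    ∑ i, hA.eigenvalues i ^ 2 = ∑ i, ∑ j, A i j ^ 2 := by
  obtain ⟨U, W, -, hU', hs⟩ := exists_diagonalization hA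
  have h1 : (A * A).trace = ∑ i, hA.eigenvalues i ^ 2 := by
    have : A * A = U * (diagonal hA.eigenvalues * diagonal hA.eigenvalues) * W := by
      conv_lhs => rw [hs]
      calc _ = U * diagonal hA.eigenvalues * (W * U) * diagonal hA.eigenvalues * W := by
            simp only [mul_assoc]
        _ = _ := by rw [hU']; simp only [mul_assoc, one_mul]
    rw [this, trace_mul_comm, ← mul_assoc, hU', one_mul, diagonal_mul_diagonal, trace_diagonal]
    simp [sq]
  rw [← h1]
  simp only [trace, diag, mul_apply]
  refine Finset.sum_congr rfl fun i _ => Finset.sum_congr rfl fun j _ => ?_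
  have := hA.apply i j
  simp only [star_trivial] at this
  rw [this, sq]

theorem hessMat_apply (f : EuclideanSpace ℝ (Fin d) → ℝ) (x) (i j : Fin d) :
    hessMat d f x i j = fderiv ℝ (fderiv ℝ f) x
      (EuclideanSpace.single i 1) (EuclideanSpace.single j 1) := by
  simp [hessMat, iteratedFDeriv_two_apply]

theorem isHermitian_hessMat {f : EuclideanSpace ℝ (Fin d) → ℝ} (hf : ContDiff ℝ 2 f) (x) :
    (hessMat d f x).IsHermitian := by
  refine IsHermitian.ext fun i j => ?_
  rw [star_trivial, hessMat_apply, hessMat_apply]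
  exact (hf.contDiffAt.isSymmSndFDerivAt (by simp)).eq _ _

theorem hessMat_mulVec_dotProduct (f : EuclideanSpace ℝ (Fin d) → ℝ) (x v) :
    (hessMat d f x *ᵥ fun i => v i) ⬝ᵥ (fun i => v i) = fderiv ℝ (fderiv ℝ f) x v v := by
  have hv : v = ∑ i, v i • EuclideanSpace.single i (1 : ℝ) := by
    simpa using ((EuclideanSpace.basisFun (Fin d) ℝ).sum_repr v).symm
  conv_rhs => rw [hv]
  simp only [map_sum, map_smul, _root_.sum_apply, _root_.smul_apply,
    dotProduct, mulVec, hessMat_apply, Finset.sum_mul, smul_eq_mul, Finset.mul_sum]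
  rw [Finset.sum_comm]
  exact Finset.sum_congr rfl fun i _ => Finset.sum_congr rfl fun j _ => by ring

theorem hasDerivAt_sum_log (l : Fin d → ℝ) {t : ℝ} (ht : ∀ i, 1 + t * l i ≠ 0) :
    HasDerivAt (fun s => ∑ i, Real.log (1 + s * l i)) (∑ i, l i / (1 + t * l i)) t := by
  refine HasDerivAt.fun_sum fun i _ => ?_
  have : HasDerivAt (fun s => 1 + s * l i) (l i) t := by
    simpa using ((hasDerivAt_id t).mul_const (l i)).const_add 1
  exact this.log (ht i)

theorem hasDerivAt_sum_div (l : Fin d → ℝ) :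
    HasDerivAt (fun s => ∑ i, l i / (1 + s * l i)) (-∑ i, l i ^ 2) 0 := by
  rw [← Finset.sum_neg_distrib]
  refine HasDerivAt.fun_sum fun i _ => ?_
  have : HasDerivAt (fun s => 1 + s * l i) (l i) 0 := by
    simpa using ((hasDerivAt_id (0:ℝ)).mul_const (l i)).const_add 1
  simpa [sq] using (hasDerivAt_const (0:ℝ) (l i)).fun_div this (by simp)

end linalg

/-! ### The integrand of `h` -/

section main
variable {d : ℕ}

theorem contDiff_gradient {ψ : EuclideanSpace ℝ (Fin d) → ℝ} (hψ : ContDiff ℝ (⊤ : ℕ∞) ψ)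
    : ContDiff ℝ 2 (gradient ψ) :=
  (InnerProductSpace.toDual ℝ (EuclideanSpace ℝ (Fin d))).symm.contDiff.comp
    ((contDiff_infty.1 hψ 3).fderiv_right (m := 2) (by norm_num))

theorem contDiff_hessMat {ψ : EuclideanSpace ℝ (Fin d) → ℝ} (hψ : ContDiff ℝ (⊤ : ℕ∞) ψ)
    (i j : Fin d) : ContDiff ℝ 2 fun x => hessMat d ψ x i j := by
  simp only [hessMat_apply]
  have h2 : ContDiff ℝ 2 (fderiv ℝ (fderiv ℝ ψ)) :=
    ((contDiff_infty.1 hψ 4).fderiv_right (m := 3) (by norm_num)).fderiv_right (m := 2) (by norm_num)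
  exact (h2.clm_apply contDiff_const).clm_apply contDiff_const

theorem contDiff_det {ψ : EuclideanSpace ℝ (Fin d) → ℝ} (hψ : ContDiff ℝ (⊤ : ℕ∞) ψ) :
    ContDiff ℝ 2 fun p : ℝ × EuclideanSpace ℝ (Fin d) => (1 + p.1 • hessMat d ψ p.2).det := by
  simp only [det_apply', Matrix.add_apply, Matrix.smul_apply]
  refine ContDiff.sum fun σ _ => contDiff_const.mul (contDiff_prod fun i _ =>
    contDiff_const.add (contDiff_fst.smul ((contDiff_hessMat hψ _ _).comp contDiff_snd)))

theorem gradient_eq_zero {ψ : EuclideanSpace ℝ (Fin d) → ℝ} {x} (hx : x ∉ tsupport ψ) :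
    gradient ψ x = 0 := by
  simp [gradient, fderiv_of_notMem_tsupport ℝ hx]

theorem hessMat_eq_zero {ψ : EuclideanSpace ℝ (Fin d) → ℝ} {x} (hx : x ∉ tsupport ψ) :
    hessMat d ψ x = 0 := by
  ext i j
  have : x ∉ tsupport (fderiv ℝ ψ) := fun h => hx (tsupport_fderiv_subset ℝ h)
  simp [hessMat_apply, fderiv_of_notMem_tsupport ℝ this]

/-- The determinant is `1` at `t = 0` and off the support of `ψ`, so the tube lemma, applied to the
compact set `{0} × tsupport ψ`, keeps it positive uniformly in `x` for small `t`. -/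
theorem exists_det_pos {ψ : EuclideanSpace ℝ (Fin d) → ℝ} (hψ : ContDiff ℝ (⊤ : ℕ∞) ψ)
    (hψc : HasCompactSupport ψ) :
    ∃ r > (0 : ℝ), ∀ t ∈ Set.Ioo (-r) r, ∀ x, 0 < (1 + t • hessMat d ψ x).det := by
  obtain ⟨u, v, hu, -, h0u, hKv, huv⟩ := generalized_tube_lemma
    (isCompact_singleton (x := (0 : ℝ))) (show IsCompact (tsupport ψ) from hψc)
    (isOpen_Ioi.preimage (contDiff_det hψ).continuous : IsOpen (_ ⁻¹' Set.Ioi (0 : ℝ)))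
    (by rintro ⟨t, x⟩ ⟨rfl, -⟩; simp)
  obtain ⟨r, hr, hball⟩ := Metric.isOpen_iff.1 hu 0 (h0u rfl)
  rw [Real.ball_eq_Ioo, zero_sub, zero_add] at hball
  refine ⟨r, hr, fun t ht x => ?_⟩
  by_cases hx : x ∈ tsupport ψ
  · exact huv (show (t, x) ∈ u ×ˢ v from ⟨hball ht, hKv hx⟩)
  · simp [hessMat_eq_zero hx]

/-- The integrand `V(x + t∇ψ(x)) - V(x) - log det(I + t Hψ(x))` of `h`, as a function of the
pair `(t, x)`. -/
noncomputable def entropyIntegrand (V ψ : EuclideanSpace ℝ (Fin d) → ℝ)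
    (p : ℝ × EuclideanSpace ℝ (Fin d)) : ℝ :=
  V (p.2 + p.1 • gradient ψ p.2) - V p.2 - Real.log (1 + p.1 • hessMat d ψ p.2).det

variable {V ψ : EuclideanSpace ℝ (Fin d) → ℝ} {r : ℝ}

theorem contDiffOn_entropyIntegrand (hV : ContDiff ℝ 2 V) (hψ : ContDiff ℝ (⊤ : ℕ∞) ψ)
    (hdet : ∀ t ∈ Set.Ioo (-r) r, ∀ x, 0 < (1 + t • hessMat d ψ x).det) :
    ContDiffOn ℝ 2 (entropyIntegrand V ψ) (Set.Ioo (-r) r ×ˢ Set.univ) := by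
  have hg : ContDiff ℝ 2 fun p : ℝ × EuclideanSpace ℝ (Fin d) =>
      V (p.2 + p.1 • gradient ψ p.2) - V p.2 :=
    (hV.comp (contDiff_snd.add (contDiff_fst.smul
      ((contDiff_gradient hψ).comp contDiff_snd)))).sub (hV.comp contDiff_snd)
  exact hg.contDiffOn.sub ((contDiff_det hψ).contDiffOn.log
    fun p hp => (hdet p.1 hp.1 p.2).ne')

theorem entropyIntegrand_eq_zero (t : ℝ) {x} (hx : x ∉ tsupport ψ) :
    entropyIntegrand V ψ (t, x) = 0 := by
  simp [entropyIntegrand, gradient_eq_zero hx, hessMat_eq_zero hx]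

theorem hasDerivAt_comp_line (hV : ContDiff ℝ 2 V) (x v : EuclideanSpace ℝ (Fin d)) (t : ℝ) :
    HasDerivAt (fun s : ℝ => V (x + s • v)) (fderiv ℝ V (x + t • v) v) t := by
  have hl : HasDerivAt (fun s : ℝ => x + s • v) v t := by
    simpa using ((hasDerivAt_id t).smul_const v).const_add x
  exact ((hV.differentiable two_ne_zero) _).hasFDerivAt.comp_hasDerivAt t hl

theorem hasDerivAt_fderiv_line (hV : ContDiff ℝ 2 V) (x v : EuclideanSpace ℝ (Fin d)) :
    HasDerivAt (fun s : ℝ => fderiv ℝ V (x + s • v) v) (fderiv ℝ (fderiv ℝ V) x v v) 0 := by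
  have hl : HasDerivAt (fun s : ℝ => x + s • v) v 0 := by
    simpa using ((hasDerivAt_id (0 : ℝ)).smul_const v).const_add x
  have h1 : HasFDerivAt (fderiv ℝ V) (fderiv ℝ (fderiv ℝ V) x) (x + (0 : ℝ) • v) := by
    rw [zero_smul, add_zero]
    exact (((hV.fderiv_right (m := 1) (by norm_num)).differentiable one_ne_zero) x).hasFDerivAt
  have h2 : HasDerivAt (fun s : ℝ => fderiv ℝ V (x + s • v)) (fderiv ℝ (fderiv ℝ V) x v) 0 :=
    HasFDerivAt.comp_hasDerivAt (0 : ℝ) h1 hl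
  simpa only [map_zero, add_zero] using h2.clm_apply (hasDerivAt_const (0 : ℝ) v)

/-- For fixed `x`, with `λᵢ` the eigenvalues of `Hψ(x)`, the integrand is
`V(x + t∇ψ(x)) - V(x) - ∑ log(1 + t λᵢ)`; its second derivative at `t = 0` is
`D²V(x)(∇ψ(x), ∇ψ(x)) + ∑ λᵢ²`. -/
theorem sliceDeriv_sliceDeriv_entropyIntegrand (hr : 0 < r) (hV : ContDiff ℝ 2 V)
    (hψ : ContDiff ℝ (⊤ : ℕ∞) ψ)
    (hdet : ∀ t ∈ Set.Ioo (-r) r, ∀ x, 0 < (1 + t • hessMat d ψ x).det)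
    (x : EuclideanSpace ℝ (Fin d)) :
    sliceDeriv (sliceDeriv (entropyIntegrand V ψ)) (0, x) =
      ((hessMat d V x) *ᵥ (fun i => gradient ψ x i)) ⬝ᵥ (fun i => gradient ψ x i)
        + ∑ i, ∑ j, (hessMat d ψ x i j) ^ 2 := by
  have hF := contDiffOn_entropyIntegrand hV hψ hdet
  have hA : (hessMat d ψ x).IsHermitian :=
    isHermitian_hessMat (contDiff_infty.1 hψ 2) x
  have hne : ∀ t ∈ Set.Ioo (-r) r, ∀ i, 1 + t * hA.eigenvalues i ≠ 0 := by
    intro t ht i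
    have := (hdet t ht x).ne'
    rw [det_one_add_smul_eq_prod hA] at this
    exact Finset.prod_ne_zero_iff.1 this i (Finset.mem_univ i)
  have hnhds : Set.Ioo (-r) r ∈ nhds (0 : ℝ) := isOpen_Ioo.mem_nhds ⟨neg_lt_zero.2 hr, hr⟩
  have hfirst : ∀ t ∈ Set.Ioo (-r) r, sliceDeriv (entropyIntegrand V ψ) (t, x) =
      fderiv ℝ V (x + t • gradient ψ x) (gradient ψ x)
        - ∑ i, hA.eigenvalues i / (1 + t * hA.eigenvalues i) := by
    intro t ht
    refine (hasDerivAt_slice (hF.of_le one_le_two) ht x).unique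
      ((((hasDerivAt_comp_line hV x (gradient ψ x) t).sub_const (V x)).sub
        (hasDerivAt_sum_log hA.eigenvalues (hne t ht))).congr_of_eventuallyEq ?_)
    filter_upwards [isOpen_Ioo.mem_nhds ht] with s hs
    simp only [entropyIntegrand, Pi.sub_apply, det_one_add_smul_eq_prod hA,
      Real.log_prod fun i _ => hne s hs i]
  have hsecond := (hasDerivAt_fderiv_line hV x (gradient ψ x)).sub
    (hasDerivAt_sum_div hA.eigenvalues)
  rw [hessMat_mulVec_dotProduct, ← sum_sq_eigenvalues hA, ← sub_neg_eq_add]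
  refine (hasDerivAt_slice (contDiffOn_sliceDeriv hF (m := 1) (by norm_num))
    ⟨neg_lt_zero.2 hr, hr⟩ x).unique (hsecond.congr_of_eventuallyEq ?_)
  filter_upwards [hnhds] with s hs using hfirst s hs
end main

/-- Proposition 2.1, Wasserstein Hessian of the relative entropy:
for `h(t) = ∫ [V(x + t∇ψ(x)) - V(x) - log det(I + t Hψ(x))] dμ`, the function `h` is
twice differentiable near `0` with
`h''(0) = ∫ [⟨H_V(x)∇ψ(x), ∇ψ(x)⟩ + ‖Hψ(x)‖²_HS] dμ`. -/
theorem stmt_17 (d : ℕ) (hd : 1 ≤ d)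
    (V : EuclideanSpace ℝ (Fin d) → ℝ) (hV : ContDiff ℝ 2 V)
    (μ : Measure (EuclideanSpace ℝ (Fin d))) [IsProbabilityMeasure μ]
    (ψ : EuclideanSpace ℝ (Fin d) → ℝ) (hψ : ContDiff ℝ (⊤ : ℕ∞) ψ)
    (hψc : HasCompactSupport ψ)
    (h : ℝ → ℝ)
    (hh : ∀ t, h t = ∫ x, (V (x + t • gradient ψ x) - V x -
      Real.log (Matrix.det (1 + t • hessMat d ψ x))) ∂μ) :
    ∃ t₀ > (0 : ℝ), ∃ h' h'' : ℝ → ℝ,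
      (∀ t ∈ Set.Ioo (-t₀) t₀, HasDerivAt h (h' t) t) ∧
      (∀ t ∈ Set.Ioo (-t₀) t₀, HasDerivAt h' (h'' t) t) ∧
      h'' 0 = ∫ x, (((hessMat d V x) *ᵥ (fun i => gradient ψ x i)) ⬝ᵥ
          (fun i => gradient ψ x i) + ∑ i, ∑ j, (hessMat d ψ x i j) ^ 2) ∂μ := by
  obtain ⟨r, hr, hdet⟩ := exists_det_pos hψ hψc
  have hF := contDiffOn_entropyIntegrand hV hψ hdet
  have h0 : ∀ t ∈ Set.Ioo (-r) r, ∀ x ∉ tsupport ψ, entropyIntegrand V ψ (t, x) = 0 :=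
    fun t _ x hx => entropyIntegrand_eq_zero t hx
  have hF1 : ContDiffOn ℝ 1 (entropyIntegrand V ψ) (Set.Ioo (-r) r ×ˢ Set.univ) :=
    hF.of_le one_le_two
  obtain rfl : h = fun t => ∫ x, entropyIntegrand V ψ (t, x) ∂μ := funext hh
  exact ⟨r, hr, fun t => ∫ x, sliceDeriv (entropyIntegrand V ψ) (t, x) ∂μ,
    fun t => ∫ x, sliceDeriv (sliceDeriv (entropyIntegrand V ψ)) (t, x) ∂μ,
    fun t ht => hasDerivAt_integral_slice μ hψc hF1 h0 ht,
    fun t ht => hasDerivAt_integral_slice μ hψc (contDiffOn_sliceDeriv hF (by norm_num))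
      (sliceDeriv_eq_zero hF1 h0) ht,
    integral_congr_ae (.of_forall (sliceDeriv_sliceDeriv_entropyIntegrand hr hV hψ hdet))⟩
end

section
/- Let y₁,…,y_n ∈ ℝ^d and q(θ) = (1/n) Σ_{i=1}^n k_ε(θ − y_i). Then the function G(w) = ∫_{ℝ^d} k_ε(θ − w) log q(θ) dθ is well-defined and differentiable on ℝ^d, with gradient ∇G(w) = ∫_{ℝ^d} k_ε(θ − w) (∇q(θ)/q(θ)) dθ = ∫_{ℝ^d} k_ε(θ − w) (Σ_i ∇k_ε(θ − y_i))/(Σ_i k_ε(θ − y_i)) dθ. -/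
/-!
The translation `θ = z + w` moves the parameter `w` off the kernel:
`G w = ∫ k_ε z * log q (z + w) dz`. One may therefore differentiate `log q` under the integral
sign, with no integration by parts and hence no boundary terms.

Domination comes from the fact that `∇ log q (θ)` is an average of the vectors `-(θ - yᵢ) / ε²` with
weights proportional to `k_ε (θ - yᵢ)`, so it grows at most linearly (`norm_score_le`). By the mean
value inequality `log q` then grows at most quadratically, and the Gaussian kernel has finite
moments (`integrable_kG_mul_sq`). The differentiation itself is carried out in
`hasGradientAt_integral_kG` for an arbitrary function with a continuous gradient of linear growth.
-/

open MeasureTheory Real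

lemma continuous_nablaKG (d : ℕ) (ε : ℝ) : Continuous (nablaKG d ε) := by
  unfold nablaKG
  have := continuous_kG d ε
  fun_prop

lemma hasGradientAt_kG (d : ℕ) {ε : ℝ} (hε : 0 < ε) (x : EuclideanSpace ℝ (Fin d)) :
    HasGradientAt (kG d ε) (nablaKG d ε x) x := by
  rw [hasGradientAt_iff_hasFDerivAt]
  have h1 := (hasStrictFDerivAt_norm_sq x).hasFDerivAt
  have h2 := ((h1.neg.mul_const ((2 * ε ^ 2)⁻¹)).exp).const_mul
    ((2 * π * ε ^ 2) ^ (-(d : ℝ) / 2))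
  have h3 : HasFDerivAt (kG d ε) _ x := h2
  refine h3.congr_fderiv ?_
  ext v
  simp [nablaKG, kG, div_eq_mul_inv]
  field_simp

/-- The second moment of the Gaussian is finite: half of the Gaussian decay absorbs the quadratic
factor, because `1 + t ≤ exp t`. -/
lemma integrable_kG_mul_sq (d : ℕ) {ε : ℝ} (hε : 0 < ε) :
    Integrable (fun z : EuclideanSpace ℝ (Fin d) => kG d ε z * (1 + ‖z‖) ^ 2) := by
  have hb : 0 < 1 / (4 * ε ^ 2) := by positivity
  have hI : Integrable (fun z : EuclideanSpace ℝ (Fin d) =>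
      Real.exp (-(1 / (4 * ε ^ 2)) * ‖z‖ ^ 2)) := by
    have h := (GaussianFourier.integrable_cexp_neg_mul_sq_norm_add
      (V := EuclideanSpace ℝ (Fin d)) (b := ((1 / (4 * ε ^ 2) : ℝ) : ℂ))
      (by rwa [Complex.ofReal_re]) 0 0).norm
    refine h.congr (Filter.Eventually.of_forall fun z => ?_)
    simp only [Complex.norm_exp]
    congr 1
    simp only [zero_mul, add_zero]
    norm_cast
  set c := (2 * π * ε ^ 2) ^ (-(d : ℝ) / 2) with hc
  have hc0 : 0 ≤ c := by positivity
  refine (hI.const_mul (c * (2 + 8 * ε ^ 2))).mono' ?_ (Filter.Eventually.of_forall fun z => ?_)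
  · exact ((continuous_kG d ε).mul (by fun_prop)).aestronglyMeasurable
  · have hk := (kG_pos d hε z).le
    rw [Real.norm_of_nonneg (by positivity)]
    have hexp : -‖z‖ ^ 2 / (2 * ε ^ 2)
        = -(1 / (4 * ε ^ 2)) * ‖z‖ ^ 2 + -(1 / (4 * ε ^ 2)) * ‖z‖ ^ 2 := by
      field_simp
      ring
    have h1 : (1 + ‖z‖) ^ 2 ≤ (2 + 8 * ε ^ 2) * Real.exp (1 / (4 * ε ^ 2) * ‖z‖ ^ 2) := by
      have h2 := Real.add_one_le_exp (1 / (4 * ε ^ 2) * ‖z‖ ^ 2)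
      have h3 : (2 + 8 * ε ^ 2) * (1 / (4 * ε ^ 2) * ‖z‖ ^ 2 + 1)
          = 2 * (1 / (4 * ε ^ 2) * ‖z‖ ^ 2) + 2 * ‖z‖ ^ 2 + 2 + 8 * ε ^ 2 := by
        field_simp
        ring
      have h4 : 0 ≤ 1 / (4 * ε ^ 2) * ‖z‖ ^ 2 := by positivity
      calc (1 + ‖z‖) ^ 2 ≤ (2 + 8 * ε ^ 2) * (1 / (4 * ε ^ 2) * ‖z‖ ^ 2 + 1) := by
            rw [h3]
            nlinarith [sq_nonneg (1 - ‖z‖), sq_nonneg ε]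
        _ ≤ _ := by gcongr
    have h5 : Real.exp (-(1 / (4 * ε ^ 2)) * ‖z‖ ^ 2) * Real.exp (1 / (4 * ε ^ 2) * ‖z‖ ^ 2) = 1 := by
      rw [← Real.exp_add]
      simp
    unfold kG
    rw [hexp, Real.exp_add, ← hc]
    set e := Real.exp (-(1 / (4 * ε ^ 2)) * ‖z‖ ^ 2)
    have he : 0 ≤ e := (Real.exp_pos _).le
    calc c * (e * e) * (1 + ‖z‖) ^ 2
        ≤ c * (e * e) * ((2 + 8 * ε ^ 2) * Real.exp (1 / (4 * ε ^ 2) * ‖z‖ ^ 2)) := by gcongr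
      _ = c * (2 + 8 * ε ^ 2) * e * (e * Real.exp (1 / (4 * ε ^ 2) * ‖z‖ ^ 2)) := by ring
      _ = c * (2 + 8 * ε ^ 2) * e := by rw [h5, mul_one]

lemma one_add_norm_add_le {E : Type*} [NormedAddCommGroup E] (z x : E) :
    1 + ‖z + x‖ ≤ (1 + ‖x‖) * (1 + ‖z‖) := by
  nlinarith [norm_add_le z x, norm_nonneg z, norm_nonneg x,
    mul_nonneg (norm_nonneg z) (norm_nonneg x)]

/-- A function with gradient of linear growth has quadratic growth. -/
lemma abs_le_of_gradient_growth {E : Type*} [NormedAddCommGroup E] [InnerProductSpace ℝ E]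
    [CompleteSpace E] {f : E → ℝ} {V : E → E} {C : ℝ} (hC : 0 ≤ C)
    (hf : ∀ x, HasGradientAt f (V x) x)
    (hV : ∀ x, ‖V x‖ ≤ C * (1 + ‖x‖)) (x : E) :
    |f x| ≤ (|f 0| + C) * (1 + ‖x‖) ^ 2 := by
  have h := (convex_closedBall (0 : E) ‖x‖).norm_image_sub_le_of_norm_hasFDerivWithin_le
    (f := f) (C := C * (1 + ‖x‖))
    (fun u _ => (hasGradientAt_iff_hasFDerivAt.1 (hf u)).hasFDerivWithinAt)
    (fun u hu => by
      rw [LinearIsometryEquiv.norm_map]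
      refine (hV u).trans ?_
      have : ‖u‖ ≤ ‖x‖ := by simpa using hu
      gcongr)
    (x := 0) (y := x) (by simp) (by simp)
  rw [sub_zero, Real.norm_eq_abs] at h
  have h1 : |f x| ≤ |f 0| + |f x - f 0| := by
    simpa using abs_add_le (f 0) (f x - f 0)
  have hx := norm_nonneg x
  nlinarith [mul_nonneg hC hx, mul_nonneg (abs_nonneg (f 0)) hx,
    mul_nonneg (abs_nonneg (f 0)) (mul_nonneg hx hx)]

lemma integrable_kG_mul_shift (d : ℕ) {ε : ℝ} (hε : 0 < ε)
    {f : EuclideanSpace ℝ (Fin d) → ℝ} {V : EuclideanSpace ℝ (Fin d) → EuclideanSpace ℝ (Fin d)}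
    {C : ℝ} (hC : 0 ≤ C) (hf : ∀ x, HasGradientAt f (V x) x)
    (hV : ∀ x, ‖V x‖ ≤ C * (1 + ‖x‖)) (w : EuclideanSpace ℝ (Fin d)) :
    Integrable (fun z => kG d ε z * f (z + w)) := by
  have hfc : Continuous f := continuous_iff_continuousAt.2 fun x =>
    (hasGradientAt_iff_hasFDerivAt.1 (hf x)).continuousAt
  refine ((integrable_kG_mul_sq d hε).const_mul ((|f 0| + C) * (1 + ‖w‖) ^ 2)).mono' ?_
    (Filter.Eventually.of_forall fun z => ?_)
  · exact ((continuous_kG d ε).mul (by fun_prop)).aestronglyMeasurable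
  · have hk := (kG_pos d hε z).le
    rw [norm_mul, Real.norm_of_nonneg hk, Real.norm_eq_abs]
    calc kG d ε z * |f (z + w)|
        ≤ kG d ε z * ((|f 0| + C) * (1 + ‖z + w‖) ^ 2) := by
          gcongr
          exact abs_le_of_gradient_growth hC hf hV _
      _ ≤ kG d ε z * ((|f 0| + C) * ((1 + ‖w‖) * (1 + ‖z‖)) ^ 2) := by
          gcongr
          exact one_add_norm_add_le z w
      _ = _ := by ring

/-- Differentiation under the integral sign for Gaussian mollification. -/
lemma hasGradientAt_integral_kG (d : ℕ) {ε : ℝ} (hε : 0 < ε)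
    {f : EuclideanSpace ℝ (Fin d) → ℝ} {V : EuclideanSpace ℝ (Fin d) → EuclideanSpace ℝ (Fin d)}
    {C : ℝ} (hC : 0 ≤ C) (hf : ∀ x, HasGradientAt f (V x) x) (hVc : Continuous V)
    (hV : ∀ x, ‖V x‖ ≤ C * (1 + ‖x‖)) (w : EuclideanSpace ℝ (Fin d)) :
    HasGradientAt (fun w => ∫ z, kG d ε z * f (z + w)) (∫ z, kG d ε z • V (z + w)) w := by
  have hkc := continuous_kG d ε
  have hfc : Continuous f := continuous_iff_continuousAt.2 fun x =>
    (hasGradientAt_iff_hasFDerivAt.1 (hf x)).continuousAt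
  have hbound : ∀ z, ∀ x ∈ Metric.ball w 1,
      ‖kG d ε z • V (z + x)‖ ≤ C * (2 + ‖w‖) * (kG d ε z * (1 + ‖z‖) ^ 2) := by
    intro z x hx
    have hk := (kG_pos d hε z).le
    have hx' : ‖x‖ ≤ 1 + ‖w‖ := by
      have h1 : ‖x - w‖ < 1 := by simpa [dist_eq_norm] using hx
      have h2 := norm_add_le (x - w) w
      rw [sub_add_cancel] at h2
      linarith
    rw [norm_smul, Real.norm_of_nonneg hk]
    have h3 : 1 + ‖z + x‖ ≤ (2 + ‖w‖) * (1 + ‖z‖) ^ 2 := by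
      refine (one_add_norm_add_le z x).trans ?_
      have hz := norm_nonneg z
      exact mul_le_mul (by linarith) (by nlinarith) (by positivity) (by positivity)
    calc kG d ε z * ‖V (z + x)‖ ≤ kG d ε z * (C * ((2 + ‖w‖) * (1 + ‖z‖) ^ 2)) := by
          gcongr
          exact (hV _).trans (by gcongr)
      _ = _ := by ring
  have hdom := (integrable_kG_mul_sq d hε).const_mul (C * (2 + ‖w‖))
  let T := InnerProductSpace.toDual ℝ (EuclideanSpace ℝ (Fin d))
  have hGint : Integrable (fun z => kG d ε z • V (z + w)) :=
    hdom.mono' (Continuous.aestronglyMeasurable (by fun_prop))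
      (Filter.Eventually.of_forall fun z => hbound z w (by simp))
  have key := hasFDerivAt_integral_of_dominated_of_fderiv_le (𝕜 := ℝ) (μ := volume)
    (F := fun x z => kG d ε z * f (z + x)) (F' := fun x z => T (kG d ε z • V (z + x)))
    (x₀ := w) (bound := fun z => C * (2 + ‖w‖) * (kG d ε z * (1 + ‖z‖) ^ 2))
    (Metric.ball_mem_nhds w one_pos)
    (Filter.Eventually.of_forall fun x =>
      Continuous.aestronglyMeasurable (by fun_prop))
    (integrable_kG_mul_shift d hε hC hf hV w)
    (Continuous.aestronglyMeasurable (by fun_prop))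
    (Filter.Eventually.of_forall fun z x hx => by
      rw [LinearIsometryEquiv.norm_map]
      exact hbound z x hx)
    hdom
    (Filter.Eventually.of_forall fun z x _ => by
      have h1 := (hasGradientAt_iff_hasFDerivAt.1 (hf (z + x))).comp x
        ((hasFDerivAt_id x).const_add z)
      refine (h1.const_mul (kG d ε z)).congr_fderiv ?_
      ext v
      simp [T])
  rw [hasGradientAt_iff_hasFDerivAt]
  refine key.congr_fderiv ?_
  have hTint : Integrable (fun z => T (kG d ε z • V (z + w))) :=
    hGint.norm.mono' (Continuous.aestronglyMeasurable (by fun_prop))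
      (Filter.Eventually.of_forall fun z => (LinearIsometryEquiv.norm_map T _).le)
  ext v
  rw [ContinuousLinearMap.integral_apply hTint v]
  simp only [T, InnerProductSpace.toDual_apply_apply]
  simp only [fun x : EuclideanSpace ℝ (Fin d) => real_inner_comm v x]
  exact integral_inner hGint v

/-- The score `∇ log q` of a Gaussian mixture grows at most linearly, being a weighted average of
the vectors `-(θ - yᵢ) / ε²`. -/
lemma norm_score_le (d : ℕ) {ε : ℝ} (hε : 0 < ε) {n : ℕ}
    (ys : Fin n → EuclideanSpace ℝ (Fin d)) (θ : EuclideanSpace ℝ (Fin d))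
    (hS : 0 < ∑ i, kG d ε (θ - ys i)) :
    ‖(∑ i, kG d ε (θ - ys i))⁻¹ • ∑ i, nablaKG d ε (θ - ys i)‖
      ≤ 1 / ε ^ 2 * (1 + ∑ i, ‖ys i‖) * (1 + ‖θ‖) := by
  have hM : 0 ≤ ∑ i, ‖ys i‖ := Finset.sum_nonneg fun i _ => norm_nonneg _
  rw [norm_smul, Real.norm_of_nonneg (by positivity), inv_mul_le_iff₀ hS, Finset.sum_mul]
  refine (norm_sum_le _ _).trans (Finset.sum_le_sum fun i _ => ?_)
  have hk := (kG_pos d hε (θ - ys i)).le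
  have hy : ‖ys i‖ ≤ ∑ i, ‖ys i‖ :=
    Finset.single_le_sum (f := fun i => ‖ys i‖) (fun i _ => norm_nonneg _) (Finset.mem_univ i)
  have h1 : ‖θ - ys i‖ ≤ (1 + ∑ i, ‖ys i‖) * (1 + ‖θ‖) := by
    nlinarith [norm_sub_le θ (ys i), norm_nonneg θ, mul_nonneg hM (norm_nonneg θ)]
  rw [nablaKG, norm_smul, norm_mul, norm_neg, Real.norm_of_nonneg hk,
    Real.norm_of_nonneg (by positivity)]
  calc 1 / ε ^ 2 * kG d ε (θ - ys i) * ‖θ - ys i‖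
      ≤ 1 / ε ^ 2 * kG d ε (θ - ys i) * ((1 + ∑ i, ‖ys i‖) * (1 + ‖θ‖)) := by gcongr
    _ = _ := by ring

lemma hasGradientAt_log_mixture (d : ℕ) {ε : ℝ} (hε : 0 < ε) {n : ℕ} (hn : 1 ≤ n)
    (ys : Fin n → EuclideanSpace ℝ (Fin d)) (θ : EuclideanSpace ℝ (Fin d))
    (hS : 0 < ∑ i, kG d ε (θ - ys i)) :
    HasGradientAt (fun θ => Real.log ((1 / n : ℝ) * ∑ i, kG d ε (θ - ys i)))
      ((∑ i, kG d ε (θ - ys i))⁻¹ • ∑ i, nablaKG d ε (θ - ys i)) θ := by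
  have hn0 : (0 : ℝ) < n := by exact_mod_cast hn
  rw [hasGradientAt_iff_hasFDerivAt]
  have h1 : ∀ i ∈ Finset.univ, HasFDerivAt (fun θ => kG d ε (θ - ys i))
      (InnerProductSpace.toDual ℝ _ (nablaKG d ε (θ - ys i))) θ := fun i _ => by
    have h := hasGradientAt_iff_hasFDerivAt.1 (hasGradientAt_kG d hε (θ - ys i))
    exact h.comp θ ((hasFDerivAt_id θ).sub_const (ys i))
  have h2 := ((HasFDerivAt.fun_sum h1).const_mul (1 / n : ℝ)).log (by positivity)
  refine h2.congr_fderiv ?_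
  ext v
  simp
  field_simp

/-- the function `G(w) = ∫ k_ε(θ - w) log q(θ) dθ`, where
`q = (1/n) Σᵢ k_ε(· - yᵢ)`, is well-defined and differentiable with
`∇G(w) = ∫ k_ε(θ - w) (Σᵢ ∇k_ε(θ - yᵢ))/(Σᵢ k_ε(θ - yᵢ)) dθ`
(note `∇q(θ)/q(θ) = (Σᵢ ∇k_ε(θ - yᵢ))/(Σᵢ k_ε(θ - yᵢ))`, the factor `1/n` cancelling). -/
theorem stmt_18 (d : ℕ) (hd : 1 ≤ d) (ε : ℝ) (hε : 0 < ε) (n : ℕ) (hn : 1 ≤ n)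
    (ys : Fin n → EuclideanSpace ℝ (Fin d)) :
    (∀ w, Integrable (fun θ => kG d ε (θ - w) *
        Real.log ((1 / n : ℝ) * ∑ i, kG d ε (θ - ys i)))) ∧
    (∀ w, HasGradientAt
        (fun w => ∫ θ, kG d ε (θ - w) * Real.log ((1 / n : ℝ) * ∑ i, kG d ε (θ - ys i)))
        (∫ θ, ((∑ i, kG d ε (θ - ys i))⁻¹ * kG d ε (θ - w)) •
          (∑ i, nablaKG d ε (θ - ys i))) w) := by
  have : Nonempty (Fin n) := ⟨⟨0, hn⟩⟩
  have hS : ∀ θ, 0 < ∑ i, kG d ε (θ - ys i) := fun θ =>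
    Finset.sum_pos (fun i _ => kG_pos d hε _) Finset.univ_nonempty
  have hf := fun θ => hasGradientAt_log_mixture d hε hn ys θ (hS θ)
  have hV := fun θ => norm_score_le d hε ys θ (hS θ)
  have hC : 0 ≤ 1 / ε ^ 2 * (1 + ∑ i, ‖ys i‖) := by positivity
  have hVc : Continuous fun θ =>
      (∑ i, kG d ε (θ - ys i))⁻¹ • ∑ i, nablaKG d ε (θ - ys i) := by
    have h1 := continuous_kG d ε
    have h2 := continuous_nablaKG d ε
    exact Continuous.smul (Continuous.inv₀ (by fun_prop) fun θ => (hS θ).ne') (by fun_prop)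
  refine ⟨fun w => ?_, fun w => ?_⟩
  · simpa using (integrable_kG_mul_shift d hε hC hf hV w).comp_sub_right w
  · have key := hasGradientAt_integral_kG d hε hC hf hVc hV w
    -- the substitution `θ = z + w` in both the function and its gradient
    have e1 : (fun w => ∫ θ, kG d ε (θ - w) *
          Real.log ((1 / n : ℝ) * ∑ i, kG d ε (θ - ys i)))
        = fun w => ∫ z, kG d ε z *
          Real.log ((1 / n : ℝ) * ∑ i, kG d ε (z + w - ys i)) := by
      funext w
      rw [← integral_add_right_eq_self _ w]
      simp only [add_sub_cancel_right]
    have e2 : (∫ θ, ((∑ i, kG d ε (θ - ys i))⁻¹ * kG d ε (θ - w)) •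
          (∑ i, nablaKG d ε (θ - ys i)))
        = ∫ z, kG d ε z • ((∑ i, kG d ε (z + w - ys i))⁻¹ •
          ∑ i, nablaKG d ε (z + w - ys i)) := by
      rw [← integral_add_right_eq_self _ w]
      simp only [add_sub_cancel_right, smul_smul, mul_comm]
    rw [e1, e2]
    exact key
end
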